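/- arXiv:1904.01887 — 7 statements merged into one kernel-verified Lean document; each statement's English description precedes it below -/
import Mathlib

section
/- Let p ≥ 1, 0 < q < 1, and m ≥ 1. Then for every vector u ∈ ℝ^m, the limit inferior, as z → 0 with z ≠ 0, of the quotient (‖z‖_p^q − ⟨u, z⟩)/‖z‖_2 is nonnegative. Equivalently, every u ∈ ℝ^m is a regular (Fréchet) subgradient of the function z ↦ ‖z‖_p^q at the origin, so the regular subdifferential of ‖·‖_p^q at 0 is all of ℝ^m. -/
open Topology Filter

/-!
If `N z → 0⁺` and `‖z‖ = O(N z)` as `z → 0`, then for `q < 1` the quotient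
`N z ^ q / ‖z‖ ≥ c * N z ^ (q - 1)` tends to infinity, whereas `⟪u, z⟫ / ‖z‖` is at most `‖u‖`.
Taking `N` to be the `ℓ^p` quasinorm, which dominates every coordinate, the difference quotient of
`‖·‖_p ^ q - ⟪u, ·⟫` at the origin not only has nonnegative limit inferior but tends to infinity.
-/

section NormedSpace

variable {E : Type*} [NormedAddCommGroup E] {N : E → ℝ} {q : ℝ}

lemma tendsto_rpow_div_norm_atTop (hN : Tendsto N (𝓝[≠] 0) (𝓝[>] 0))
    (hO : (fun z : E => z) =O[𝓝[≠] 0] N) (hq : q < 1) :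
    Tendsto (fun z => N z ^ q / ‖z‖) (𝓝[≠] 0) atTop := by
  obtain ⟨C, hC, hbound⟩ := hO.exists_pos
  have hlower : Tendsto (fun z => C⁻¹ * N z ^ (q - 1)) (𝓝[≠] 0) atTop :=
    ((tendsto_rpow_neg_nhdsGT_zero (sub_neg.2 hq)).comp hN).const_mul_atTop (inv_pos.2 hC)
  refine tendsto_atTop_mono' _ ?_ hlower
  filter_upwards [hbound.bound, hN.eventually self_mem_nhdsWithin, self_mem_nhdsWithin]
    with z hz (hpos : 0 < N z) (hz0 : z ≠ 0)
  rw [Real.norm_of_nonneg hpos.le] at hz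
  rw [le_div_iff₀ (norm_pos_iff.2 hz0)]
  calc C⁻¹ * N z ^ (q - 1) * ‖z‖ ≤ C⁻¹ * N z ^ (q - 1) * (C * N z) := by gcongr
    _ = N z ^ q := by
      rw [Real.rpow_sub_one hpos.ne']
      field_simp

lemma tendsto_rpow_sub_clm_div_norm_atTop [NormedSpace ℝ E]
    (hN : Tendsto N (𝓝[≠] 0) (𝓝[>] 0)) (hO : (fun z : E => z) =O[𝓝[≠] 0] N) (hq : q < 1)
    (f : E →L[ℝ] ℝ) :
    Tendsto (fun z => (N z ^ q - f z) / ‖z‖) (𝓝[≠] 0) atTop := by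
  have hf (z : E) : f z / ‖z‖ ≤ ‖f‖ :=
    (div_le_div_of_nonneg_right (le_abs_self _) (norm_nonneg z)).trans (f.ratio_le_opNorm z)
  refine tendsto_atTop_mono (fun z => ?_)
    (tendsto_atTop_add_const_right _ (-‖f‖) (tendsto_rpow_div_norm_atTop hN hO hq))
  rw [sub_div, sub_eq_add_neg]
  gcongr
  exact hf z

end NormedSpace

section LpQuasinorm

variable {ι : Type*} [Fintype ι] {p : ℝ}

/-- The `ℓ^p` quasinorm `‖z‖_p` of a finite family of reals. The Mathlib norm on `PiLp` is a norm
only for `1 ≤ p`, whereas here any `0 < p` is of interest. -/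
noncomputable def lpQuasinorm (p : ℝ) (z : ι → ℝ) : ℝ := (∑ i, |z i| ^ p) ^ (1 / p)

lemma abs_apply_le_lpQuasinorm (hp : 0 < p) (z : ι → ℝ) (i : ι) : |z i| ≤ lpQuasinorm p z := by
  have hterm : |z i| ^ p ≤ ∑ j, |z j| ^ p :=
    Finset.single_le_sum (f := fun j => |z j| ^ p) (fun j _ => by positivity) (Finset.mem_univ i)
  rw [lpQuasinorm, one_div]
  exact (Real.le_rpow_inv_iff_of_pos (by positivity) (by positivity) hp).2 hterm

lemma lpQuasinorm_pos (hp : 0 < p) {z : ι → ℝ} (hz : z ≠ 0) : 0 < lpQuasinorm p z := by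
  obtain ⟨i, hi⟩ := Function.ne_iff.1 hz
  exact (abs_pos.2 hi).trans_le (abs_apply_le_lpQuasinorm hp z i)

lemma lpQuasinorm_zero (hp : 0 < p) : lpQuasinorm p (0 : ι → ℝ) = 0 := by
  simp [lpQuasinorm, hp.ne']

lemma continuous_lpQuasinorm (hp : 0 < p) : Continuous (lpQuasinorm p : (ι → ℝ) → ℝ) :=
  (continuous_finsetSum _ fun i _ => (continuous_apply i).abs.rpow_const fun _ => .inr hp.le)
    |>.rpow_const fun _ => .inr (by positivity)

lemma tendsto_lpQuasinorm_nhdsGT_zero (hp : 0 < p) :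
    Tendsto (fun z : EuclideanSpace ℝ ι => lpQuasinorm p z.ofLp) (𝓝[≠] 0) (𝓝[>] 0) := by
  have hcont : Continuous fun z : EuclideanSpace ℝ ι => lpQuasinorm p z.ofLp :=
    (continuous_lpQuasinorm hp).comp (PiLp.continuous_ofLp 2 _)
  refine tendsto_nhdsWithin_iff.2 ⟨?_, ?_⟩
  · exact (hcont.tendsto' 0 0 (lpQuasinorm_zero hp)).mono_left nhdsWithin_le_nhds
  · filter_upwards [self_mem_nhdsWithin] with z hz
    exact lpQuasinorm_pos hp ((WithLp.ofLp_eq_zero 2).not.2 hz)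

lemma isBigO_lpQuasinorm (hp : 0 < p) (l : Filter (EuclideanSpace ℝ ι)) :
    (fun z => z) =O[l] fun z => lpQuasinorm p z.ofLp := by
  have hcoord : (fun z : EuclideanSpace ℝ ι => z.ofLp) =O[l] fun z => lpQuasinorm p z.ofLp :=
    Asymptotics.isBigO_pi.2 fun i => .of_norm_le fun z =>
      abs_apply_le_lpQuasinorm hp z.ofLp i
  exact ((EuclideanSpace.equiv ι ℝ).isBigO_comp_rev _ l).trans hcoord

end LpQuasinorm

theorem stmt_4_general {ι : Type*} [Fintype ι] {p q : ℝ} (hp : 0 < p) (hq : q < 1)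
    (u : EuclideanSpace ℝ ι) :
    Tendsto (fun z : EuclideanSpace ℝ ι =>
      (((∑ i, |z i| ^ p) ^ (1 / p)) ^ q - ∑ i, u i * z i) / ‖z‖) (𝓝[≠] 0) atTop := by
  have hinner (z : EuclideanSpace ℝ ι) : innerSL ℝ u z = ∑ i, u i * z i := by
    simp [PiLp.inner_apply, mul_comm]
  have hsmall := tendsto_lpQuasinorm_nhdsGT_zero (ι := ι) hp
  have hdom := isBigO_lpQuasinorm (ι := ι) hp (𝓝[≠] 0)
  simpa only [lpQuasinorm, hinner] using
    tendsto_rpow_sub_clm_div_norm_atTop hsmall hdom hq (innerSL ℝ u)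

/-- Every `u ∈ ℝ^m` is a regular (Fréchet) subgradient of `z ↦ ‖z‖_p^q` at the origin:
the liminf as `z → 0`, `z ≠ 0`, of `(‖z‖_p^q − ⟨u, z⟩)/‖z‖₂` is nonnegative, i.e.
for every `ε > 0` the quotient is eventually `≥ −ε` along `𝓝[≠] 0`. -/
theorem stmt_4 (m : ℕ) (hm : 1 ≤ m) (p q : ℝ) (hp : 1 ≤ p) (hq0 : 0 < q) (hq1 : q < 1)
    (u : EuclideanSpace ℝ (Fin m)) :
    ∀ ε > (0 : ℝ), ∀ᶠ z in 𝓝[≠] (0 : EuclideanSpace ℝ (Fin m)),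
      -ε ≤ (((∑ i, |z i| ^ p) ^ (1 / p)) ^ q - ∑ i, u i * z i) / ‖z‖ :=
  fun ε _ => (stmt_4_general (zero_lt_one.trans_le hp) hq1 u).eventually_ge_atTop (-ε)
end

section
/- Let 0 < q < 1 and let y ∈ ℝ^m with y ≠ 0. A vector u ∈ ℝ^m is a regular (Fréchet) subgradient of the function z ↦ ‖z‖_1^q at y if and only if u_j = q·‖y‖_1^{q−1}·sgn(y_j) for every index j with y_j ≠ 0, and |u_j| ≤ q·‖y‖_1^{q−1} for every index j with y_j = 0. -/
open Topology Filter

/-!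
Near `‖y‖₁ > 0` the power `t ↦ t ^ q` is differentiable and `‖·‖₁` is Lipschitz, so to first order
`z ↦ ‖z‖₁ ^ q` is `c * ‖z‖₁` with `c = q * ‖y‖₁ ^ (q - 1)`, and both have the same regular
subgradients at `y`. As `c * ‖·‖₁` is a separable sum, these are computed coordinatewise: `c * |·|`
is differentiable away from `0` and positively homogeneous at `0`.
-/

section InnerProductSpace

variable {E : Type*} [NormedAddCommGroup E] [InnerProductSpace ℝ E]
  {f g : E → ℝ} {u x : E}

/-- `u` is a regular (Fréchet) subgradient of `f` at `x`, i.e.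
`f z ≥ f x + ⟪u, z - x⟫ - o(‖z - x‖)` as `z → x`. This is the nonnegativity of the liminf of the
difference quotient with the denominator cleared, so that `z = x` need not be excluded. -/
def IsRegularSubgradientAt (f : E → ℝ) (u x : E) : Prop :=
  ∀ ε > (0 : ℝ), ∀ᶠ z in 𝓝 x, -ε * ‖z - x‖ ≤ f z - f x - inner ℝ u (z - x)

lemma isRegularSubgradientAt_iff_div :
    IsRegularSubgradientAt f u x ↔
      ∀ ε > (0 : ℝ), ∀ᶠ z in 𝓝[≠] x, -ε ≤ (f z - f x - inner ℝ u (z - x)) / ‖z - x‖ := by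
  refine forall₂_congr fun ε _ => ?_
  rw [eventually_nhdsWithin_iff]
  refine eventually_congr (Eventually.of_forall fun z => ?_)
  rcases eq_or_ne z x with rfl | hz
  · simp
  · simp [hz, le_div_iff₀ (norm_sub_pos_iff.2 hz)]

lemma IsRegularSubgradientAt.of_isLittleO (hf : IsRegularSubgradientAt f u x)
    (hfg : (fun z => f z - f x - (g z - g x)) =o[𝓝 x] fun z => z - x) :
    IsRegularSubgradientAt g u x := by
  intro ε hε
  filter_upwards [hf (ε / 2) (half_pos hε), hfg.def (half_pos hε)] with z hfz hfgz
  linarith [(abs_le.1 hfgz).2]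

lemma isRegularSubgradientAt_congr_of_isLittleO
    (hfg : (fun z => f z - f x - (g z - g x)) =o[𝓝 x] fun z => z - x) :
    IsRegularSubgradientAt f u x ↔ IsRegularSubgradientAt g u x :=
  ⟨fun hf => hf.of_isLittleO hfg,
    fun hg => hg.of_isLittleO (hfg.neg_left.congr_left fun _ => neg_sub _ _)⟩

lemma isRegularSubgradientAt_comp_iff {φ : ℝ → ℝ} {φ' : ℝ}
    (hf : (fun z => f z - f x) =O[𝓝 x] fun z => z - x) (hφ : HasDerivAt φ φ' (f x)) :
    IsRegularSubgradientAt (fun z => φ (f z)) u x ↔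
      IsRegularSubgradientAt (fun z => φ' * f z) u x := by
  have hcont : Tendsto f (𝓝 x) (𝓝 (f x)) :=
    tendsto_sub_nhds_zero_iff.1 (hf.trans_tendsto (tendsto_sub_nhds_zero_iff.2 tendsto_id))
  refine isRegularSubgradientAt_congr_of_isLittleO
    (((hφ.isLittleO.comp_tendsto hcont).trans_isBigO hf).congr_left fun z => ?_)
  simp only [Function.comp_apply, smul_eq_mul]
  ring

lemma IsRegularSubgradientAt.inner_le_of_hasDerivWithinAt (hf : IsRegularSubgradientAt f u x)
    {w : E} {d : ℝ} (hd : HasDerivWithinAt (fun t : ℝ => f (x + t • w)) d (Set.Ioi 0) 0) :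
    inner ℝ u w ≤ d := by
  have hslope := (hasDerivWithinAt_iff_tendsto_slope' Set.self_notMem_Ioi).1 hd
  have hray : Tendsto (fun t : ℝ => x + t • w) (𝓝[>] 0) (𝓝 x) :=
    tendsto_nhdsWithin_of_tendsto_nhds (Continuous.tendsto' (by fun_prop) _ _ (by simp))
  have hbound : ∀ ε > (0 : ℝ), inner ℝ u w - ε * ‖w‖ ≤ d := by
    intro ε hε
    refine ge_of_tendsto hslope ?_
    filter_upwards [hray.eventually (hf ε hε), self_mem_nhdsWithin] with t ht (ht₀ : 0 < t)
    rw [add_sub_cancel_left, inner_smul_right, norm_smul, Real.norm_of_nonneg ht₀.le] at ht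
    rw [slope_def_field, sub_zero, zero_smul, add_zero, le_div_iff₀ ht₀]
    linarith
  have hlim : Tendsto (fun ε : ℝ => inner ℝ u w - ε * ‖w‖) (𝓝[>] 0) (𝓝 (inner ℝ u w)) :=
    tendsto_nhdsWithin_of_tendsto_nhds (Continuous.tendsto' (by fun_prop) _ _ (by simp))
  exact le_of_tendsto hlim (eventually_mem_nhdsWithin.mono hbound)

lemma isRegularSubgradientAt_iff_eq_of_hasGradientAt [CompleteSpace E] {f' : E}
    (hf : HasGradientAt f f' x) : IsRegularSubgradientAt f u x ↔ u = f' := by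
  constructor
  · intro hu
    have hle (w : E) : inner ℝ u w ≤ inner ℝ f' w :=
      hu.inner_le_of_hasDerivWithinAt (hf.hasFDerivAt.hasLineDerivAt w).hasDerivWithinAt
    have hself : inner ℝ (u - f') (u - f') ≤ 0 := by
      rw [inner_sub_left]
      exact sub_nonpos.2 (hle _)
    exact sub_eq_zero.1 (real_inner_self_nonpos.1 hself)
  · rintro rfl ε hε
    filter_upwards [(hasGradientAt_iff_isLittleO.1 hf).def hε] with z hz
    linarith [(abs_le.1 hz).1]

lemma isRegularSubgradientAt_zero_iff_of_posHomogeneous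
    (hf : ∀ t : ℝ, 0 ≤ t → ∀ w, f (t • w) = t * f w) :
    IsRegularSubgradientAt f u 0 ↔ ∀ w, inner ℝ u w ≤ f w := by
  constructor
  · intro hu w
    refine hu.inner_le_of_hasDerivWithinAt ?_
    refine (((hasDerivAt_id (0 : ℝ)).mul_const (f w)).hasDerivWithinAt.congr_deriv
      (one_mul _)).congr (fun t (ht : 0 < t) => ?_) ?_
    · simp [hf t ht.le]
    · simpa using hf 0 le_rfl w
  · intro hle ε hε
    have hf₀ : f 0 = 0 := by simpa using hf 0 le_rfl 0
    refine Eventually.of_forall fun z => ?_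
    have hεz : 0 ≤ ε * ‖z‖ := by positivity
    rw [hf₀, sub_zero, sub_zero]
    linarith [hle z]

end InnerProductSpace

section SeparableSum

variable {ι : Type*} [Fintype ι] {E : ι → Type*} [∀ i, NormedAddCommGroup (E i)]
  [∀ i, InnerProductSpace ℝ (E i)] {f : ∀ i, E i → ℝ} {u x : PiLp 2 E}

lemma IsRegularSubgradientAt.apply_of_sum
    (h : IsRegularSubgradientAt (fun z : PiLp 2 E => ∑ i, f i (z i)) u x) (i : ι) :
    IsRegularSubgradientAt (f i) (u i) (x i) := by
  classical
  intro ε hε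
  have hslice : Tendsto (fun w : E i => x + PiLp.single 2 i (w - x i)) (𝓝 (x i)) (𝓝 x) := by
    rw [tendsto_iff_norm_sub_tendsto_zero]
    simpa using tendsto_iff_norm_sub_tendsto_zero.1 (tendsto_id (x := 𝓝 (x i)))
  filter_upwards [hslice.eventually (h ε hε)] with w hw
  have hsum : ∑ j, f j ((x + PiLp.single 2 i (w - x i)) j) - ∑ j, f j (x j)
      = f i w - f i (x i) := by
    rw [← Finset.sum_sub_distrib, Fintype.sum_eq_single i fun j hj => by simp [hj]]
    simp
  have hinner : inner ℝ u (PiLp.single 2 i (w - x i)) = inner ℝ (u i) (w - x i) := by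
    rw [PiLp.inner_apply, Fintype.sum_eq_single i fun j hj => by simp [hj]]
    simp
  rwa [hsum, add_sub_cancel_left, hinner, PiLp.norm_single] at hw

lemma IsRegularSubgradientAt.sum_of_apply
    (h : ∀ i, IsRegularSubgradientAt (f i) (u i) (x i)) :
    IsRegularSubgradientAt (fun z : PiLp 2 E => ∑ i, f i (z i)) u x := by
  intro ε hε
  set δ : ℝ := ε / (Fintype.card ι + 1) with hδ
  have hδ₀ : 0 < δ := by positivity
  have hcard : Fintype.card ι * δ ≤ ε := by
    rw [hδ, mul_div_assoc', div_le_iff₀ (by positivity)]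
    linarith
  have hev : ∀ᶠ z : PiLp 2 E in 𝓝 x, ∀ i,
      -δ * ‖z i - x i‖ ≤ f i (z i) - f i (x i) - inner ℝ (u i) (z i - x i) :=
    eventually_all.2 fun i => ((PiLp.continuous_apply 2 E i).tendsto x).eventually (h i δ hδ₀)
  filter_upwards [hev] with z hz
  calc -ε * ‖z - x‖ ≤ -(Fintype.card ι * δ) * ‖z - x‖ := by gcongr
    _ = ∑ _i : ι, -δ * ‖z - x‖ := by
      rw [Finset.sum_const, Finset.card_univ, nsmul_eq_mul]
      ring
    _ ≤ ∑ i, -δ * ‖z i - x i‖ := Finset.sum_le_sum fun i _ =>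
      mul_le_mul_of_nonpos_left (PiLp.norm_apply_le (z - x) i) (by linarith)
    _ ≤ ∑ i, (f i (z i) - f i (x i) - inner ℝ (u i) (z i - x i)) :=
      Finset.sum_le_sum fun i _ => hz i
    _ = ∑ i, f i (z i) - ∑ i, f i (x i) - inner ℝ u (z - x) := by
      simp only [Finset.sum_sub_distrib, PiLp.inner_apply, PiLp.sub_apply]

lemma isRegularSubgradientAt_sum_iff :
    IsRegularSubgradientAt (fun z : PiLp 2 E => ∑ i, f i (z i)) u x ↔
      ∀ i, IsRegularSubgradientAt (f i) (u i) (x i) :=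
  ⟨IsRegularSubgradientAt.apply_of_sum, IsRegularSubgradientAt.sum_of_apply⟩

end SeparableSum

section AbsoluteValue

lemma isRegularSubgradientAt_const_mul_abs_of_ne_zero {c v a : ℝ} (ha : a ≠ 0) :
    IsRegularSubgradientAt (fun t => c * |t|) v a ↔ v = c * Real.sign a := by
  have habs : HasDerivAt (|·|) (Real.sign a) a := by
    rcases ha.lt_or_gt with ha | ha
    · simpa [Real.sign_of_neg ha] using hasDerivAt_abs_neg ha
    · simpa [Real.sign_of_pos ha] using hasDerivAt_abs_pos ha
  exact isRegularSubgradientAt_iff_eq_of_hasGradientAt (habs.const_mul c).hasGradientAt'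

lemma isRegularSubgradientAt_const_mul_abs_zero {c v : ℝ} :
    IsRegularSubgradientAt (fun t => c * |t|) v 0 ↔ |v| ≤ c := by
  rw [isRegularSubgradientAt_zero_iff_of_posHomogeneous fun t ht w => by
    rw [smul_eq_mul, abs_mul, abs_of_nonneg ht, mul_left_comm]]
  simp only [RCLike.inner_apply', conj_trivial]
  constructor
  · intro h
    exact abs_le'.2 ⟨by simpa using h 1, by simpa using h (-1)⟩
  · intro h w
    calc v * w ≤ |v| * |w| := (le_abs_self _).trans (abs_mul _ _).le
      _ ≤ c * |w| := by gcongr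

lemma isRegularSubgradientAt_const_mul_abs_iff {c v a : ℝ} :
    IsRegularSubgradientAt (fun t => c * |t|) v a ↔
      (a ≠ 0 → v = c * Real.sign a) ∧ (a = 0 → |v| ≤ c) := by
  rcases eq_or_ne a 0 with rfl | ha
  · simp [isRegularSubgradientAt_const_mul_abs_zero]
  · simp [isRegularSubgradientAt_const_mul_abs_of_ne_zero, ha]

end AbsoluteValue

section SumAbs

variable {ι : Type*} [Fintype ι]

lemma isBigO_sum_abs_sub (y : EuclideanSpace ℝ ι) :
    (fun z : EuclideanSpace ℝ ι => ∑ i, |z i| - ∑ i, |y i|) =O[𝓝 y] fun z => z - y := by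
  have hcoord (i : ι) (z : EuclideanSpace ℝ ι) : ‖|z i| - |y i|‖ ≤ ‖z - y‖ :=
    (abs_abs_sub_abs_le _ _).trans (PiLp.norm_apply_le (z - y) i)
  simp only [← Finset.sum_sub_distrib]
  exact Asymptotics.IsBigO.fun_sum fun i _ =>
    Asymptotics.IsBigO.of_bound' (Eventually.of_forall (hcoord i))

lemma sum_abs_pos {y : EuclideanSpace ℝ ι} (hy : y ≠ 0) : 0 < ∑ i, |y i| := by
  obtain ⟨j, hj⟩ : ∃ j, y j ≠ 0 := by
    by_contra! h
    exact hy (PiLp.ext h)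
  exact Finset.sum_pos' (fun i _ => abs_nonneg _) ⟨j, Finset.mem_univ j, abs_pos.2 hj⟩

lemma isRegularSubgradientAt_const_mul_sum_abs_iff {c : ℝ} {u y : EuclideanSpace ℝ ι} :
    IsRegularSubgradientAt (fun z : EuclideanSpace ℝ ι => c * ∑ i, |z i|) u y ↔
      (∀ j, y j ≠ 0 → u j = c * Real.sign (y j)) ∧ ∀ j, y j = 0 → |u j| ≤ c := by
  simp only [Finset.mul_sum, isRegularSubgradientAt_sum_iff (f := fun _ t => c * |t|),
    isRegularSubgradientAt_const_mul_abs_iff, forall_and]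

lemma isRegularSubgradientAt_euclideanSpace_iff_div {f : EuclideanSpace ℝ ι → ℝ}
    {u y : EuclideanSpace ℝ ι} :
    IsRegularSubgradientAt f u y ↔ ∀ ε > (0 : ℝ), ∀ᶠ z in 𝓝[≠] y,
      -ε ≤ (f z - f y - ∑ i, u i * (z i - y i)) / ‖z - y‖ := by
  simp only [isRegularSubgradientAt_iff_div, PiLp.inner_apply, PiLp.sub_apply,
    RCLike.inner_apply', conj_trivial]

end SumAbs

theorem stmt_6_general {ι : Type*} [Fintype ι] (q : ℝ) (y u : EuclideanSpace ℝ ι) (hy : y ≠ 0) :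
    (∀ ε > (0 : ℝ), ∀ᶠ z in 𝓝[≠] y,
        -ε ≤ ((∑ i, |z i|) ^ q - (∑ i, |y i|) ^ q - ∑ i, u i * (z i - y i)) / ‖z - y‖) ↔
      ((∀ j, y j ≠ 0 → u j = q * (∑ i, |y i|) ^ (q - 1) * Real.sign (y j)) ∧
        (∀ j, y j = 0 → |u j| ≤ q * (∑ i, |y i|) ^ (q - 1))) := by
  have hpow := Real.hasDerivAt_rpow_const (p := q) (Or.inl (sum_abs_pos hy).ne')
  rw [← isRegularSubgradientAt_euclideanSpace_iff_div (f := fun z => (∑ i, |z i|) ^ q),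
    ← isRegularSubgradientAt_const_mul_sum_abs_iff]
  exact isRegularSubgradientAt_comp_iff (isBigO_sum_abs_sub y) hpow

/-- Characterization of the regular (Fréchet) subgradients of `z ↦ ‖z‖₁^q` at `y ≠ 0`:
`u` is a regular subgradient (i.e. the liminf as `z → y`, `z ≠ y`, of
`(‖z‖₁^q − ‖y‖₁^q − ⟨u, z − y⟩)/‖z − y‖₂` is nonnegative) iff
`u_j = q‖y‖₁^(q−1) sgn(y_j)` whenever `y_j ≠ 0` and `|u_j| ≤ q‖y‖₁^(q−1)` whenever `y_j = 0`. -/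
theorem stmt_6 (m : ℕ) (q : ℝ) (hq0 : 0 < q) (hq1 : q < 1)
    (y u : EuclideanSpace ℝ (Fin m)) (hy : y ≠ 0) :
    (∀ ε > (0 : ℝ), ∀ᶠ z in 𝓝[≠] y,
        -ε ≤ ((∑ i, |z i|) ^ q - (∑ i, |y i|) ^ q - ∑ i, u i * (z i - y i)) / ‖z - y‖) ↔
      ((∀ j, y j ≠ 0 → u j = q * (∑ i, |y i|) ^ (q - 1) * Real.sign (y j)) ∧
        (∀ j, y j = 0 → |u j| ≤ q * (∑ i, |y i|) ^ (q - 1))) :=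
  stmt_6_general q y u hy
end

section
/- Let p > 1, 0 < q < 1, 1 < r < ∞, α > 0. Suppose x* ∈ ℝ^N is a local minimizer of E(x) = ∑_{i=1}^G ‖x_i‖_p^q + (1/(rα))·∑_{k=1}^M |(Ax − y)_k|^r, and suppose the group i of x* is nonzero. Then for every coordinate j belonging to group i, q·‖x*_i‖_p^{q−p}·|x*_j|^{p−1}·sgn(x*_j) + (1/α)·∑_{k=1}^M |(Ax* − y)_k|^{r−1}·sgn((Ax* − y)_k)·A_{k,j} = 0. -/
/-!
The objective need not be differentiable at a local extremum, because a vanishing group contributes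
`‖x_i‖_p ^ q`, but it is differentiable along `e_j`: the groups not containing `j` are constant on
this line, and the ones containing `j` do not vanish near the extremum, so the chain rule applies.
The stated equation is that the derivative along `e_j` vanishes.
-/

open Finset

section LineDeriv

theorem hasLineDerivAt_comp {𝕜 E : Type*} [NontriviallyNormedField 𝕜] [AddCommGroup E] [Module 𝕜 E]
    {h : 𝕜 → 𝕜} {f : E → 𝕜} {h' f' : 𝕜} {x v : E}
    (hh : HasDerivAt h h' (f x)) (hf : HasLineDerivAt 𝕜 f f' x v) :
    HasLineDerivAt 𝕜 (fun x => h (f x)) (h' * f') x v :=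
  hh.comp_of_eq 0 hf (by simp)

theorem hasLineDerivAt_of_forall_add_smul {𝕜 E : Type*} [NontriviallyNormedField 𝕜]
    [AddCommGroup E] [Module 𝕜 E] {f : E → 𝕜} {f' : 𝕜} {x v : E}
    (hf : ∀ t : 𝕜, f (x + t • v) = f x + t * f') : HasLineDerivAt 𝕜 f f' x v := by
  simpa [HasLineDerivAt, hf] using ((hasDerivAt_id (0 : 𝕜)).mul_const f').const_add (f x)

theorem hasLineDerivAt_apply {𝕜 ι : Type*} [NontriviallyNormedField 𝕜] (j : ι) (x v : ι → 𝕜) :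
    HasLineDerivAt 𝕜 (fun x : ι → 𝕜 => x j) (v j) x v :=
  hasLineDerivAt_of_forall_add_smul fun _ => rfl

theorem hasLineDerivAt_mulVec_sub_apply {𝕜 ι κ : Type*} [NontriviallyNormedField 𝕜] [Fintype ι]
    (A : Matrix κ ι 𝕜) (y : κ → 𝕜) (k : κ) (x v : ι → 𝕜) :
    HasLineDerivAt 𝕜 (fun x => (A.mulVec x - y) k) (A.mulVec v k) x v :=
  hasLineDerivAt_of_forall_add_smul fun t => by
    simp only [Matrix.mulVec_add, Matrix.mulVec_smul, Pi.sub_apply, Pi.add_apply, Pi.smul_apply,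
      smul_eq_mul]
    ring

end LineDeriv

section AbsRpow

theorem abs_rpow_sub_two_mul_self (x p : ℝ) :
    |x| ^ (p - 2) * x = |x| ^ (p - 1) * Real.sign x := by
  rcases eq_or_ne x 0 with rfl | hx
  · simp
  have habs_mul_sign : |x| * Real.sign x = x := by
    rcases lt_or_gt_of_ne hx with hneg | hpos
    · rw [abs_of_neg hneg, Real.sign_of_neg hneg, neg_mul_neg, mul_one]
    · rw [abs_of_pos hpos, Real.sign_of_pos hpos, mul_one]
  calc |x| ^ (p - 2) * x = |x| ^ (p - 2) * |x| * Real.sign x := by rw [mul_assoc, habs_mul_sign]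
    _ = |x| ^ (p - 1) * Real.sign x := by
      rw [← Real.rpow_add_one (abs_ne_zero.mpr hx)]
      ring_nf

theorem hasDerivAt_abs_rpow_sign {p : ℝ} (hp : 1 < p) (x : ℝ) :
    HasDerivAt (fun x : ℝ => |x| ^ p) (p * (|x| ^ (p - 1) * Real.sign x)) x := by
  simpa only [mul_assoc, abs_rpow_sub_two_mul_self] using hasDerivAt_abs_rpow x hp

theorem hasLineDerivAt_sum_abs_rpow {E κ : Type*} [AddCommGroup E] [Module ℝ E] {p : ℝ}
    (hp : 1 < p) {s : Finset κ} {f : κ → E → ℝ} {f' : κ → ℝ} {x v : E}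
    (hf : ∀ k ∈ s, HasLineDerivAt ℝ (f k) (f' k) x v) :
    HasLineDerivAt ℝ (fun x => ∑ k ∈ s, |f k x| ^ p)
      (p * ∑ k ∈ s, |f k x| ^ (p - 1) * Real.sign (f k x) * f' k) x v := by
  refine (HasDerivAt.fun_sum fun k hk =>
    hasLineDerivAt_comp (hasDerivAt_abs_rpow_sign hp (f k x)) (hf k hk)).congr_deriv ?_
  simp only [mul_sum, mul_assoc]

end AbsRpow

section LpNormOn

variable {ι : Type*} {p : ℝ} {s : Finset ι} {x v : ι → ℝ}

/-- The `ℓ_p` norm `‖x_s‖_p` of the subvector of `x` with coordinates in `s`, for a real exponent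
`p ≠ 0`. -/
noncomputable def lpNormOn (p : ℝ) (s : Finset ι) (x : ι → ℝ) : ℝ :=
  (∑ j ∈ s, |x j| ^ p) ^ (1 / p)

theorem sum_abs_rpow_pos (p : ℝ) (hx : ∃ j ∈ s, x j ≠ 0) : 0 < ∑ j ∈ s, |x j| ^ p := by
  obtain ⟨j, hj, hxj⟩ := hx
  exact sum_pos' (fun _ _ => by positivity) ⟨j, hj, by positivity⟩

theorem hasDerivAt_rpow_one_div_rpow (q : ℝ) (hp : p ≠ 0) {t : ℝ} (ht : 0 < t) :
    HasDerivAt (fun t : ℝ => (t ^ (1 / p)) ^ q) (q / p * (t ^ (1 / p)) ^ (q - p)) t := by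
  have hpow : (fun t : ℝ => (t ^ (1 / p)) ^ q) =ᶠ[nhds t] fun t => t ^ (q / p) := by
    filter_upwards [lt_mem_nhds ht] with u hu
    rw [← Real.rpow_mul hu.le, one_div_mul_eq_div]
  have hexp : (t ^ (1 / p)) ^ (q - p) = t ^ (q / p - 1) := by
    rw [← Real.rpow_mul ht.le, one_div_mul_eq_div, sub_div, div_self hp]
  rw [hexp]
  exact (Real.hasDerivAt_rpow_const (.inl ht.ne')).congr_of_eventuallyEq hpow

theorem hasLineDerivAt_lpNormOn_rpow_of_exists_ne_zero (q : ℝ) (hp : 1 < p)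
    (hx : ∃ j ∈ s, x j ≠ 0) :
    HasLineDerivAt ℝ (fun x => lpNormOn p s x ^ q)
      (q * lpNormOn p s x ^ (q - p) * ∑ j ∈ s, |x j| ^ (p - 1) * Real.sign (x j) * v j) x v := by
  have hp₀ : p ≠ 0 := (zero_lt_one.trans hp).ne'
  have hderiv := hasLineDerivAt_comp (f := fun x : ι → ℝ => ∑ j ∈ s, |x j| ^ p)
    (hasDerivAt_rpow_one_div_rpow q hp₀ (sum_abs_rpow_pos p hx))
    (hasLineDerivAt_sum_abs_rpow hp fun j _ => hasLineDerivAt_apply j x v)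
  refine HasDerivAt.congr_deriv hderiv ?_
  simp only [lpNormOn]
  field_simp

theorem hasLineDerivAt_lpNormOn_rpow (q : ℝ) (hp : 1 < p)
    (hv : (∃ j ∈ s, v j ≠ 0) → ∃ j ∈ s, x j ≠ 0) :
    HasLineDerivAt ℝ (fun x => lpNormOn p s x ^ q)
      (q * lpNormOn p s x ^ (q - p) * ∑ j ∈ s, |x j| ^ (p - 1) * Real.sign (x j) * v j) x v := by
  by_cases hvs : ∃ j ∈ s, v j ≠ 0
  · exact hasLineDerivAt_lpNormOn_rpow_of_exists_ne_zero q hp (hv hvs)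
  push Not at hvs
  have hconst (t : ℝ) : lpNormOn p s (x + t • v) = lpNormOn p s x := by
    simp +contextual [lpNormOn, hvs]
  have hsum : ∑ j ∈ s, |x j| ^ (p - 1) * Real.sign (x j) * v j = 0 :=
    sum_eq_zero fun j hj => by rw [hvs j hj, mul_zero]
  rw [hsum, mul_zero]
  exact hasLineDerivAt_of_forall_add_smul fun t => by rw [hconst, mul_zero, add_zero]

end LpNormOn

section GroupObjective

variable {ι κ γ : Type*} [Fintype ι] [Fintype κ] [Fintype γ] {p r : ℝ}

/-- The group `ℓ_{p,q}`-`ℓ_r` objective `∑ i, ‖x_{S i}‖_p ^ q + c * ∑ k, |(A x - y)_k| ^ r`.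
The groups `S i` may overlap and need not cover all coordinates. For `q < 0` a vanishing group
contributes `0`, the value of `(0 : ℝ) ^ q`. -/
noncomputable def groupObjective (S : γ → Finset ι) (p q r c : ℝ) (A : Matrix κ ι ℝ) (y : κ → ℝ)
    (x : ι → ℝ) : ℝ :=
  (∑ i, lpNormOn p (S i) x ^ q) + c * ∑ k, |(A.mulVec x - y) k| ^ r

theorem hasLineDerivAt_groupObjective {S : γ → Finset ι} (q c : ℝ) (hp : 1 < p) (hr : 1 < r)
    (A : Matrix κ ι ℝ) (y : κ → ℝ) {x v : ι → ℝ}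
    (hv : ∀ i, (∃ j ∈ S i, v j ≠ 0) → ∃ j ∈ S i, x j ≠ 0) :
    HasLineDerivAt ℝ (groupObjective S p q r c A y)
      ((∑ i, q * lpNormOn p (S i) x ^ (q - p) *
          ∑ j ∈ S i, |x j| ^ (p - 1) * Real.sign (x j) * v j)
        + c * (r * ∑ k, |(A.mulVec x - y) k| ^ (r - 1) * Real.sign ((A.mulVec x - y) k)
            * A.mulVec v k)) x v := by
  have hpenalty (i : γ) := hasLineDerivAt_lpNormOn_rpow q hp (hv i)
  have hfidelity := hasLineDerivAt_sum_abs_rpow (s := univ) hr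
    fun k _ => hasLineDerivAt_mulVec_sub_apply A y k x v
  exact (HasDerivAt.fun_sum fun i _ => hpenalty i).add (HasDerivAt.const_mul c hfidelity)

theorem stmt_7_general [DecidableEq ι] {S : γ → Finset ι} {q c : ℝ} (hp : 1 < p) (hr : 1 < r)
    {A : Matrix κ ι ℝ} {y : κ → ℝ} {x : ι → ℝ}
    (hext : IsLocalExtr (groupObjective S p q r c A y) x)
    {j : ι} (hne : ∀ i, j ∈ S i → ∃ l ∈ S i, x l ≠ 0) :
    (∑ i with j ∈ S i, q * lpNormOn p (S i) x ^ (q - p) * |x j| ^ (p - 1) * Real.sign (x j))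
      + c * r * ∑ k, |(A.mulVec x - y) k| ^ (r - 1) * Real.sign ((A.mulVec x - y) k) * A k j
        = 0 := by
  have hv (i : γ) : (∃ l ∈ S i, (Pi.single j 1 : ι → ℝ) l ≠ 0) → ∃ l ∈ S i, x l ≠ 0 := by
    rintro ⟨l, hl, hlj⟩
    obtain rfl : l = j := by
      by_contra hne
      exact hlj (Pi.single_eq_of_ne hne 1)
    exact hne i hl
  have hcrit := hext.hasLineDerivAt_eq_zero (hasLineDerivAt_groupObjective q c hp hr A y hv)
  simpa [sum_filter, Pi.single_apply, mul_assoc] using hcrit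

end GroupObjective

/-- First-order optimality condition at a local minimizer of the group `ℓ_{p,q}`-`ℓ_r`
objective, on the coordinates of a nonzero group. -/
theorem stmt_7 (N M G : ℕ) (g : Fin N → Fin G) (p q r α : ℝ)
    (hp : 1 < p) (hq0 : 0 < q) (hq1 : q < 1) (hr : 1 < r) (hα : 0 < α)
    (A : Matrix (Fin M) (Fin N) ℝ) (y : Fin M → ℝ) (xstar : Fin N → ℝ)
    (hmin : IsLocalMin (fun x : Fin N → ℝ =>
        (∑ i : Fin G, ((∑ j ∈ univ.filter fun j => g j = i, |x j| ^ p) ^ (1 / p)) ^ q)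
          + (1 / (r * α)) * ∑ k, |(A.mulVec x - y) k| ^ r) xstar)
    (i : Fin G) (hne : ∃ j, g j = i ∧ xstar j ≠ 0) :
    ∀ j, g j = i →
      q * ((∑ j' ∈ univ.filter fun j' => g j' = i, |xstar j'| ^ p) ^ (1 / p)) ^ (q - p)
            * |xstar j| ^ (p - 1) * Real.sign (xstar j)
        + (1 / α) * ∑ k, |(A.mulVec xstar - y) k| ^ (r - 1)
            * Real.sign ((A.mulVec xstar - y) k) * A k j = 0 := by
  intro j hj
  have hcrit := stmt_7_general (S := fun i => univ.filter fun j => g j = i) (j := j) hp hr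
    (.inl hmin) (by simpa [hj] using hne)
  simpa [lpNormOn, hj, filter_eq, (zero_lt_one.trans hr).ne'] using hcrit
end

section
/- Let n ≥ 1, β > 0, and let v ∈ ℝ^n have entries sorted in ascending order of absolute value: |v_1| ≤ |v_2| ≤ … ≤ |v_n|; adopt the convention |v_0| := 0. Suppose i* ∈ {0, 1, …, n−1} is such that the number t* := (1/(n − i*))·( ∑_{j=i*+1}^n |v_j| − 1/(2β) ) satisfies |v_{i*}| ≤ t* ≤ |v_{i*+1}|. Define s* ∈ ℝ^n by s*_i = v_i for i ≤ i* and s*_i = sgn(v_i)·t* for i > i*. Then s* is an optimal solution of the problem min_{s ∈ ℝ^n} ‖s‖_∞ + β‖s − v‖_2², i.e., ‖s*‖_∞ + β‖s* − v‖_2² ≤ ‖s‖_∞ + β‖s − v‖_2² for all s ∈ ℝ^n. -/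
open Finset

/-!
Clip every entry of `v` to `[-t, t]`; the residuals have absolute values `rᵢ = (|vᵢ| - t)⁺`.
If `‖s‖_∞ = M`, then `|sᵢ - vᵢ| ≥ |vᵢ| - M`, and linearizing the square at `rᵢ` gives
`(sᵢ - vᵢ)² ≥ rᵢ² + 2 rᵢ (t - M)`. Summing and multiplying by `β`, the first-order terms add up to
exactly `t - M` as soon as `2 β ∑ rᵢ = 1`, so the growth of the quadratic term makes up for any
decrease of the sup norm. The formula for `t*` is this balance condition solved for `t`.
-/

section OrderedGroup

variable {G : Type*} [AddCommGroup G] [LinearOrder G] {t x : G}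

/-- The projection of `x` onto the interval `[-t, t]`, intended for `0 ≤ t`: applied entrywise, it
is the projection onto the sup-norm ball of radius `t`. -/
def clip (t x : G) : G := max (-t) (min x t)

variable [IsOrderedAddMonoid G]

theorem clip_of_abs_le (h : |x| ≤ t) : clip t x = x := by
  rw [clip, min_eq_left (abs_le.mp h).2, max_eq_right (abs_le.mp h).1]

theorem clip_of_le (ht : 0 ≤ t) (h : t ≤ x) : clip t x = t := by
  rw [clip, min_eq_right h, max_eq_right (neg_le_self ht)]

theorem clip_of_le_neg (ht : 0 ≤ t) (h : x ≤ -t) : clip t x = -t := by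
  rw [clip, min_eq_left (h.trans (neg_le_self ht)), max_eq_left h]

theorem abs_clip_le (ht : 0 ≤ t) (x : G) : |clip t x| ≤ t :=
  abs_le.mpr ⟨le_max_left _ _, max_le (neg_le_self ht) (min_le_right _ _)⟩

theorem abs_clip_sub_self (ht : 0 ≤ t) (x : G) : |clip t x - x| = (|x| - t)⁺ := by
  rcases le_total |x| t with h | h
  · rw [clip_of_abs_le h, sub_self, abs_zero, posPart_of_nonpos (sub_nonpos.mpr h)]
  · rw [posPart_of_nonneg (sub_nonneg.mpr h)]
    rcases le_abs'.mp h with hx | hx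
    · have hx0 : x ≤ 0 := hx.trans (neg_nonpos.mpr ht)
      rw [clip_of_le_neg ht hx, abs_of_nonneg (sub_nonneg.mpr hx), abs_of_nonpos hx0]
      abel
    · rw [clip_of_le ht hx, abs_sub_comm, abs_of_nonneg (sub_nonneg.mpr hx),
        abs_of_nonneg (ht.trans hx)]

end OrderedGroup

section OrderedRing

variable {R : Type*} [CommRing R] [LinearOrder R] [IsStrictOrderedRing R]

theorem clip_sub_self_sq_add_le {t x y M : R} (ht : 0 ≤ t) (hy : |y| ≤ M) :
    (clip t x - x) ^ 2 + 2 * (|x| - t)⁺ * (t - M) ≤ (y - x) ^ 2 := by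
  rw [← sq_abs (clip t x - x), abs_clip_sub_self ht, ← sq_abs (y - x)]
  rcases le_total |x| t with h | h
  · rw [posPart_of_nonpos (sub_nonpos.mpr h)]
    simpa using sq_nonneg (y - x)
  · rw [posPart_of_nonneg (sub_nonneg.mpr h)]
    have hdist : |x| - M ≤ |y - x| := by
      rw [abs_sub_comm]
      exact (sub_le_sub_left hy _).trans (abs_sub_abs_le_abs_sub x y)
    calc (|x| - t) ^ 2 + 2 * (|x| - t) * (t - M)
        = 2 * (|x| - t) * (|x| - M) - (|x| - t) ^ 2 := by ring
      _ ≤ 2 * (|x| - t) * |y - x| - (|x| - t) ^ 2 := by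
          have := sub_nonneg.mpr h
          gcongr
      _ ≤ |y - x| ^ 2 := sub_le_iff_le_add'.mpr (two_mul_le_add_sq _ _)

theorem sup'_abs_clip_add_mul_sum_sq_le {ι : Type*} {S : Finset ι} (hS : S.Nonempty)
    {β t : R} (hβ : 0 ≤ β) (ht : 0 ≤ t) {v : ι → R}
    (hbalance : 2 * β * ∑ i ∈ S, (|v i| - t)⁺ = 1) (s : ι → R) :
    (S.sup' hS fun i => |clip t (v i)|) + β * ∑ i ∈ S, (clip t (v i) - v i) ^ 2
      ≤ (S.sup' hS fun i => |s i|) + β * ∑ i ∈ S, (s i - v i) ^ 2 := by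
  set M := S.sup' hS fun i => |s i|
  have hclip : (S.sup' hS fun i => |clip t (v i)|) ≤ t :=
    sup'_le _ _ fun i _ => abs_clip_le ht (v i)
  have hsum : ∑ i ∈ S, (clip t (v i) - v i) ^ 2 + 2 * (∑ i ∈ S, (|v i| - t)⁺) * (t - M)
      ≤ ∑ i ∈ S, (s i - v i) ^ 2 := by
    rw [mul_sum, sum_mul, ← sum_add_distrib]
    exact sum_le_sum fun i hi => clip_sub_self_sq_add_le ht (le_sup' (fun i => |s i|) hi)
  calc (S.sup' hS fun i => |clip t (v i)|) + β * ∑ i ∈ S, (clip t (v i) - v i) ^ 2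
      ≤ t + β * ∑ i ∈ S, (clip t (v i) - v i) ^ 2 := by gcongr
    _ = M + β * (∑ i ∈ S, (clip t (v i) - v i) ^ 2
          + 2 * (∑ i ∈ S, (|v i| - t)⁺) * (t - M)) := by
        linear_combination (M - t) * hbalance
    _ ≤ M + β * ∑ i ∈ S, (s i - v i) ^ 2 := by gcongr

end OrderedRing

theorem clip_of_le_abs {t x : ℝ} (ht : 0 ≤ t) (h : t ≤ |x|) : clip t x = Real.sign x * t := by
  rcases lt_trichotomy x 0 with hx | rfl | hx
  · rw [abs_of_neg hx] at h
    rw [Real.sign_of_neg hx, neg_one_mul, clip_of_le_neg ht (le_neg_of_le_neg h)]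
  · rw [Real.sign_zero, zero_mul, clip_of_abs_le (abs_zero.trans_le ht)]
  · rw [abs_of_pos hx] at h
    rw [Real.sign_of_pos hx, one_mul, clip_of_le ht h]

theorem sum_posPart_sub_eq {ι G : Type*} [AddCommGroup G] [LinearOrder G] [IsOrderedAddMonoid G]
    {S T : Finset ι} (hTS : T ⊆ S) {f : ι → G} {t : G}
    (hlow : ∀ i ∈ S, i ∉ T → f i ≤ t) (hhigh : ∀ i ∈ T, t ≤ f i) :
    ∑ i ∈ S, (f i - t)⁺ = ∑ i ∈ T, f i - #T • t := by
  rw [← sum_subset hTS fun i hi hiT => posPart_of_nonpos (sub_nonpos.mpr (hlow i hi hiT)),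
    sum_congr rfl fun i hi => posPart_of_nonneg (sub_nonneg.mpr (hhigh i hi)),
    sum_sub_distrib, sum_const]

/-- `T` is the set of clipped indices; for sorted `v` it is the final segment `i > i*`. -/
theorem stmt_10_general {ι : Type*} {S T : Finset ι} (hTS : T ⊆ S) (hT : T.Nonempty)
    {β : ℝ} (hβ : 0 < β) {v : ι → ℝ} {t : ℝ} (ht : 0 ≤ t)
    (ht_eq : t = (∑ j ∈ T, |v j| - 1 / (2 * β)) / #T)
    (hlow : ∀ i ∈ S, i ∉ T → |v i| ≤ t) (hhigh : ∀ i ∈ T, t ≤ |v i|)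
    {s' : ι → ℝ} (hs'_low : ∀ i ∈ S, i ∉ T → s' i = v i)
    (hs'_high : ∀ i ∈ T, s' i = Real.sign (v i) * t) (s : ι → ℝ) :
    (S.sup' (hT.mono hTS) fun i => |s' i|) + β * ∑ i ∈ S, (s' i - v i) ^ 2
      ≤ (S.sup' (hT.mono hTS) fun i => |s i|) + β * ∑ i ∈ S, (s i - v i) ^ 2 := by
  have hs' : ∀ i ∈ S, s' i = clip t (v i) := fun i hi => by
    by_cases hiT : i ∈ T
    · rw [hs'_high i hiT, clip_of_le_abs ht (hhigh i hiT)]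
    · rw [hs'_low i hi hiT, clip_of_abs_le (hlow i hi hiT)]
  have hbalance : 2 * β * ∑ i ∈ S, (|v i| - t)⁺ = 1 := by
    have hcard : (#T : ℝ) ≠ 0 := by exact_mod_cast hT.card_ne_zero
    rw [sum_posPart_sub_eq hTS hlow hhigh, nsmul_eq_mul, ht_eq]
    field_simp
    ring
  rw [sup'_congr _ rfl fun i hi => congrArg abs (hs' i hi),
    sum_congr rfl fun i hi => by rw [hs' i hi]]
  exact sup'_abs_clip_add_mul_sum_sq_le _ hβ.le ht hbalance s

/-- Explicit optimal solution of `min_s ‖s‖_∞ + β‖s − v‖₂²` when the entries of `v`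
(indexed `1, …, n`) are sorted in ascending order of absolute value.  The convention
`|v_0| := 0` is encoded by the hypothesis `v 0 = 0`. -/
theorem stmt_10 (n : ℕ) (hn : 1 ≤ n) (β : ℝ) (hβ : 0 < β)
    (v : ℕ → ℝ) (hv0 : v 0 = 0)
    (hsorted : ∀ i ∈ Finset.Icc 1 n, ∀ j ∈ Finset.Icc 1 n, i ≤ j → |v i| ≤ |v j|)
    (istar : ℕ) (histar : istar ≤ n - 1)
    (tstar : ℝ)
    (htstar : tstar = (∑ j ∈ Finset.Icc (istar + 1) n, |v j| - 1 / (2 * β)) / (n - istar))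
    (hlow : |v istar| ≤ tstar) (hhigh : tstar ≤ |v (istar + 1)|)
    (sstar : ℕ → ℝ)
    (hsstar : ∀ i, sstar i = if i ≤ istar then v i else Real.sign (v i) * tstar) :
    ∀ s : ℕ → ℝ,
      ((Finset.Icc 1 n).sup' (Finset.nonempty_Icc.mpr hn) fun i => |sstar i|)
          + β * ∑ i ∈ Finset.Icc 1 n, (sstar i - v i) ^ 2
        ≤ ((Finset.Icc 1 n).sup' (Finset.nonempty_Icc.mpr hn) fun i => |s i|)
          + β * ∑ i ∈ Finset.Icc 1 n, (s i - v i) ^ 2 := by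
  have hlt : istar < n := by omega
  have hcard : (n : ℝ) - istar = #(Icc (istar + 1) n) := by
    rw [Nat.card_Icc, Nat.add_sub_add_right, Nat.cast_sub hlt.le]
  rw [hcard] at htstar
  have hle : ∀ i ∈ Icc 1 n, i ∉ Icc (istar + 1) n → i ≤ istar := by
    simp only [mem_Icc]; omega
  refine stmt_10_general (Icc_subset_Icc_left (by omega)) (nonempty_Icc.mpr hlt) hβ
    ((abs_nonneg _).trans hlow) htstar (fun i hi hiT => ?_) (fun i hi => ?_)
    (fun i hi hiT => by rw [hsstar, if_pos (hle i hi hiT)])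
    (fun i hi => by rw [hsstar, if_neg (by simp only [mem_Icc] at hi; omega)])
  · have histar_mem : istar ∈ Icc 1 n := by
      have := hle i hi hiT
      simp only [mem_Icc] at hi ⊢; omega
    exact (hsorted i hi istar histar_mem (hle i hi hiT)).trans hlow
  · simp only [mem_Icc] at hi
    exact hhigh.trans (hsorted _ (by simp only [mem_Icc]; omega) i
      (by simp only [mem_Icc]; omega) hi.1)
end

section
/- Let v ∈ ℝ^n and β > 0. Then the infimum over s ∈ ℝ^n of ‖s‖_∞ + β‖s − v‖_2² equals the infimum over t ∈ [0, ∞) of t + β·∑_{i=1}^n (max(|v_i| − t, 0))², and the latter infimum is attained at some t ∈ [0, ‖v‖_∞]. -/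
/-!
Minimise first over the sup-norm ball `‖s‖ ≤ t`. Its constraints decouple over the coordinates, and
the point of the ball of radius `t` nearest to `v i` lies at distance `max (‖v i‖ - t) 0`; so a
single `s` minimises all the distances `‖s i - v i‖` at once, hence also every monotone function of
them. What remains is a problem in the radius `t`, where exceeding `‖v‖` brings no further gain, so
that a minimiser exists by compactness of `[0, ‖v‖]`.
-/

open Metric Set

section NormedGroup

variable {E : Type*} [SeminormedAddCommGroup E]

theorem max_norm_sub_le_norm_sub {s v : E} {t : ℝ} (hs : ‖s‖ ≤ t) :
    max (‖v‖ - t) 0 ≤ ‖s - v‖ :=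
  max_le (by linarith [norm_sub_norm_le v s, norm_sub_rev v s]) (norm_nonneg _)

theorem exists_norm_le_norm_sub_eq_max [NormedSpace ℝ E] (v : E) {t : ℝ} (ht : 0 ≤ t) :
    ∃ s : E, ‖s‖ ≤ t ∧ ‖s - v‖ = max (‖v‖ - t) 0 := by
  have hdist : dist v 0 ≤ t + max (‖v‖ - t) 0 := by
    linarith [dist_zero_right v, le_max_left (‖v‖ - t) 0]
  obtain ⟨s, hvs, hs⟩ := exists_dist_le_le (le_max_right _ _) ht hdist
  rw [dist_zero_right] at hs
  rw [dist_eq_norm_sub'] at hvs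
  exact ⟨s, hs, hvs.antisymm (max_norm_sub_le_norm_sub hs)⟩

theorem lowerBounds_range_norm_add_eq {g : E → ℝ} {h : ℝ → ℝ}
    (hgh : ∀ t, 0 ≤ t → IsGLB (g '' closedBall 0 t) (h t)) :
    lowerBounds (range fun s ↦ ‖s‖ + g s) = lowerBounds ((fun t ↦ t + h t) '' Ici 0) := by
  ext c
  simp only [mem_lowerBounds, forall_mem_range, forall_mem_image, mem_Ici]
  constructor
  · intro hc t ht
    have hball : c - t ≤ h t := (le_isGLB_iff (hgh t ht)).2 <| forall_mem_image.2 fun s hs ↦ by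
      linarith [hc s, mem_closedBall_zero_iff.1 hs]
    linarith
  · intro hc s
    have hs : h ‖s‖ ≤ g s :=
      (hgh ‖s‖ (norm_nonneg s)).1 (mem_image_of_mem g (mem_closedBall_zero_iff.2 le_rfl))
    linarith [hc (norm_nonneg s)]

end NormedGroup

section Pi

variable {ι : Type*} {E : ι → Type*} [∀ i, SeminormedAddCommGroup (E i)]

/-- The vector of distances from the coordinates of `v` to the closed balls of radius `t` about the
origin (when `0 ≤ t`): the smallest residuals of an approximation of `v` of sup norm at most `t`. -/
def normExcess (v : ∀ i, E i) (t : ℝ) : ι → ℝ :=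
  fun i ↦ max (‖v i‖ - t) 0

theorem normExcess_nonneg (v : ∀ i, E i) (t : ℝ) : 0 ≤ normExcess v t :=
  fun _ ↦ le_max_right _ _

theorem continuous_normExcess (v : ∀ i, E i) : Continuous (normExcess v) := by
  unfold normExcess
  fun_prop

variable [Fintype ι]

theorem normExcess_eq_zero {v : ∀ i, E i} {t : ℝ} (ht : ‖v‖ ≤ t) : normExcess v t = 0 :=
  funext fun i ↦ max_eq_right (sub_nonpos.2 ((norm_le_pi_norm v i).trans ht))

theorem isLeast_image_norm_sub_closedBall [∀ i, NormedSpace ℝ (E i)] (v : ∀ i, E i) {t : ℝ}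
    (ht : 0 ≤ t) :
    IsLeast ((fun (s : ∀ i, E i) i ↦ ‖s i - v i‖) '' closedBall 0 t) (normExcess v t) := by
  choose s hs hsv using fun i ↦ exists_norm_le_norm_sub_eq_max (v i) ht
  refine ⟨⟨s, ?_, funext hsv⟩, forall_mem_image.2 fun s' hs' i ↦ max_norm_sub_le_norm_sub ?_⟩
  · exact mem_closedBall_zero_iff.2 ((pi_norm_le_iff_of_nonneg ht).2 hs)
  · exact (norm_le_pi_norm s' i).trans (mem_closedBall_zero_iff.1 hs')

theorem isLeast_image_comp_norm_sub_closedBall [∀ i, NormedSpace ℝ (E i)] (v : ∀ i, E i)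
    {α : Type*} [Preorder α] {Φ : (ι → ℝ) → α} (hmono : MonotoneOn Φ (Ici 0)) {t : ℝ}
    (ht : 0 ≤ t) :
    IsLeast ((fun s : ∀ i, E i ↦ Φ fun i ↦ ‖s i - v i‖) '' closedBall 0 t)
      (Φ (normExcess v t)) := by
  have hnonneg : (fun (s : ∀ i, E i) i ↦ ‖s i - v i‖) '' closedBall 0 t ⊆ Ici 0 :=
    image_subset_iff.2 fun s _ i ↦ norm_nonneg (s i - v i)
  simpa only [image_image] using
    (hmono.mono hnonneg).map_isLeast (isLeast_image_norm_sub_closedBall v ht)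

theorem exists_isMinOn_add_normExcess (v : ∀ i, E i) {Φ : (ι → ℝ) → ℝ}
    (hlsc : LowerSemicontinuousOn Φ (Ici 0)) :
    ∃ t₀ ∈ Icc 0 ‖v‖, IsMinOn (fun t ↦ t + Φ (normExcess v t)) (Ici 0) t₀ := by
  have hobj : LowerSemicontinuousOn (fun t ↦ t + Φ (normExcess v t)) (Icc 0 ‖v‖) :=
    continuous_id.lowerSemicontinuous.lowerSemicontinuousOn _ |>.add <|
      hlsc.comp (continuous_normExcess v).continuousOn fun t _ ↦ normExcess_nonneg v t
  obtain ⟨t₀, ht₀, hmin⟩ :=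
    hobj.exists_isMinOn (nonempty_Icc.2 (norm_nonneg v)) isCompact_Icc
  refine ⟨t₀, ht₀, isMinOn_iff.2 fun t ht ↦ ?_⟩
  rcases le_total t ‖v‖ with htv | hvt
  · exact hmin ⟨ht, htv⟩
  · calc t₀ + Φ (normExcess v t₀)
        ≤ ‖v‖ + Φ (normExcess v ‖v‖) := hmin (right_mem_Icc.2 (norm_nonneg v))
      _ = ‖v‖ + Φ (normExcess v t) := by rw [normExcess_eq_zero le_rfl, normExcess_eq_zero hvt]
      _ ≤ t + Φ (normExcess v t) := by gcongr

theorem stmt_13_general [∀ i, NormedSpace ℝ (E i)] (v : ∀ i, E i) {Φ : (ι → ℝ) → ℝ}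
    (hmono : MonotoneOn Φ (Ici 0)) (hlsc : LowerSemicontinuousOn Φ (Ici 0)) :
    sInf (range fun s : ∀ i, E i ↦ ‖s‖ + Φ fun i ↦ ‖s i - v i‖)
        = sInf ((fun t ↦ t + Φ (normExcess v t)) '' Ici 0) ∧
    ∃ t ∈ Icc 0 ‖v‖,
      t + Φ (normExcess v t) = sInf ((fun t ↦ t + Φ (normExcess v t)) '' Ici 0) := by
  obtain ⟨t₀, ht₀, hmin⟩ := exists_isMinOn_add_normExcess v hlsc
  have hradius : IsGLB ((fun t ↦ t + Φ (normExcess v t)) '' Ici 0) (t₀ + Φ (normExcess v t₀)) :=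
    IsMinOn.isGLB (mem_Ici.2 ht₀.1) hmin
  have hnorm : IsGLB (range fun s : ∀ i, E i ↦ ‖s‖ + Φ fun i ↦ ‖s i - v i‖)
      (t₀ + Φ (normExcess v t₀)) :=
    (isGLB_congr <| lowerBounds_range_norm_add_eq fun _ ht ↦
      (isLeast_image_comp_norm_sub_closedBall v hmono ht).isGLB).2 hradius
  rw [hradius.csInf_eq (nonempty_Ici.image _), hnorm.csInf_eq (range_nonempty _)]
  exact ⟨rfl, t₀, ht₀, rfl⟩

end Pi

theorem monotoneOn_sum_pow {ι R : Type*} [Fintype ι] [Semiring R] [PartialOrder R]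
    [IsOrderedRing R] (k : ℕ) : MonotoneOn (fun x : ι → R ↦ ∑ i, x i ^ k) (Ici 0) :=
  fun _ hx _ _ hxy ↦ Finset.sum_le_sum fun i _ ↦ pow_le_pow_left₀ (hx i) (hxy i) k

/-- The infimum of `‖s‖_∞ + β‖s − v‖₂²` over `s ∈ ℝ^n` equals the infimum over
`t ∈ [0, ∞)` of `t + β ∑ (max(|v_i| − t, 0))²`, and the latter infimum is attained
at some `t ∈ [0, ‖v‖_∞]`.  Here `‖·‖` is the sup norm on `Fin n → ℝ`. -/
theorem stmt_13 (n : ℕ) (v : Fin n → ℝ) (β : ℝ) (hβ : 0 < β) :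
    sInf (Set.range fun s : Fin n → ℝ => ‖s‖ + β * ∑ i, (s i - v i) ^ 2)
        = sInf ((fun t : ℝ => t + β * ∑ i, max (|v i| - t) 0 ^ 2) '' Set.Ici 0) ∧
    ∃ t ∈ Set.Icc (0 : ℝ) ‖v‖,
      t + β * ∑ i, max (|v i| - t) 0 ^ 2
        = sInf ((fun t : ℝ => t + β * ∑ i, max (|v i| - t) 0 ^ 2) '' Set.Ici 0) := by
  simpa only [normExcess, Real.norm_eq_abs, sq_abs] using
    stmt_13_general v (Φ := fun x ↦ β * ∑ i, x i ^ 2)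
      ((monotone_mul_left_of_nonneg hβ.le).comp_monotoneOn (monotoneOn_sum_pow 2))
      ((by fun_prop : Continuous _).lowerSemicontinuous.lowerSemicontinuousOn _)
end

section
/- Let p ≥ 1, 0 < q < 1, 1 ≤ r < ∞, α > 0, A ∈ ℝ^{M×N}, and y ∈ ℝ^M. Then the objective function E(x) = ∑_{i=1}^G ‖x_i‖_p^q + (1/(rα))·∑_{k=1}^M |(Ax − y)_k|^r attains a global minimum on ℝ^N: there exists x* ∈ ℝ^N with E(x*) ≤ E(x) for all x ∈ ℝ^N. -/
open Finset

/-!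
The largest coordinate of `x` in absolute value lies in some group, so the group penalty dominates
`‖x‖ ^ q` for the sup norm. The penalty is therefore coercive, and it stays coercive when a
continuous function bounded below is added to it; a continuous coercive function on a
finite-dimensional space attains its minimum.
-/

open Filter (Tendsto atTop cocompact)

section GroupPenalty

variable {ι κ : Type*} [Fintype ι] [DecidableEq κ] {p q : ℝ}

/-- The group size `‖x_i‖_p` of the objective: the `ℓ_p` expression of the coordinates of `x` that
`g` assigns to the group `i`. For `p < 1` it need not satisfy the triangle inequality. -/
noncomputable def groupLpNorm (g : ι → κ) (p : ℝ) (x : ι → ℝ) (i : κ) : ℝ :=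
  (∑ j with g j = i, |x j| ^ p) ^ (1 / p)

theorem groupLpNorm_nonneg (g : ι → κ) (p : ℝ) (x : ι → ℝ) (i : κ) : 0 ≤ groupLpNorm g p x i := by
  unfold groupLpNorm
  positivity

theorem abs_le_groupLpNorm (g : ι → κ) (hp : 0 < p) (x : ι → ℝ) (j : ι) :
    |x j| ≤ groupLpNorm g p x (g j) := by
  rw [groupLpNorm, one_div, Real.le_rpow_inv_iff_of_pos (abs_nonneg _) (by positivity) hp]
  exact single_le_sum (f := fun l => |x l| ^ p) (fun l _ => by positivity) (by simp)

theorem continuous_groupLpNorm (g : ι → κ) (hp : 0 ≤ p) (i : κ) :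
    Continuous fun x => groupLpNorm g p x i :=
  (continuous_finsetSum _ fun j _ =>
    (continuous_apply j).abs.rpow_const fun _ => .inr hp).rpow_const
      fun _ => .inr (one_div_nonneg.2 hp)

variable [Fintype κ]

/-- The group sparsity penalty `∑ i, ‖x_i‖_p ^ q`, the regularizing term of the objective. -/
noncomputable def groupLpPenalty (g : ι → κ) (p q : ℝ) (x : ι → ℝ) : ℝ :=
  ∑ i, groupLpNorm g p x i ^ q

theorem groupLpNorm_rpow_le_groupLpPenalty (g : ι → κ) (p q : ℝ) (x : ι → ℝ) (i : κ) :
    groupLpNorm g p x i ^ q ≤ groupLpPenalty g p q x :=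
  single_le_sum (f := fun i => groupLpNorm g p x i ^ q)
    (fun i _ => Real.rpow_nonneg (groupLpNorm_nonneg g p x i) q) (mem_univ i)

theorem groupLpPenalty_nonneg (g : ι → κ) (p q : ℝ) (x : ι → ℝ) : 0 ≤ groupLpPenalty g p q x :=
  sum_nonneg fun i _ => Real.rpow_nonneg (groupLpNorm_nonneg g p x i) q

theorem continuous_groupLpPenalty (g : ι → κ) (hp : 0 ≤ p) (hq : 0 ≤ q) :
    Continuous (groupLpPenalty g p q) :=
  continuous_finsetSum _ fun i _ => (continuous_groupLpNorm g hp i).rpow_const fun _ => .inr hq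

theorem norm_rpow_le_groupLpPenalty (g : ι → κ) (hp : 0 < p) (hq : 0 < q) (x : ι → ℝ) :
    ‖x‖ ^ q ≤ groupLpPenalty g p q x := by
  have hpen := groupLpPenalty_nonneg g p q x
  have coord_rpow_le (j : ι) : |x j| ^ q ≤ groupLpPenalty g p q x :=
    (Real.rpow_le_rpow (abs_nonneg _) (abs_le_groupLpNorm g hp x j) hq.le).trans
      (groupLpNorm_rpow_le_groupLpPenalty g p q x (g j))
  rw [← Real.le_rpow_inv_iff_of_pos (norm_nonneg x) hpen hq,
    pi_norm_le_iff_of_nonneg (Real.rpow_nonneg hpen _)]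
  exact fun j => (Real.le_rpow_inv_iff_of_pos (norm_nonneg _) hpen hq).2 (coord_rpow_le j)

theorem tendsto_groupLpPenalty_cocompact_atTop (g : ι → κ) (hp : 0 < p) (hq : 0 < q) :
    Tendsto (groupLpPenalty g p q) (cocompact (ι → ℝ)) atTop :=
  Filter.tendsto_atTop_mono (norm_rpow_le_groupLpPenalty g hp hq)
    ((tendsto_rpow_atTop hq).comp (tendsto_norm_cocompact_atTop (E := ι → ℝ)))

theorem exists_forall_groupLpPenalty_add_le (g : ι → κ) (hp : 0 < p) (hq : 0 < q)
    {f : (ι → ℝ) → ℝ} (hf : Continuous f) (hbdd : BddBelow (Set.range f)) :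
    ∃ x₀, ∀ x, groupLpPenalty g p q x₀ + f x₀ ≤ groupLpPenalty g p q x + f x := by
  obtain ⟨c, hc⟩ := hbdd
  exact ((continuous_groupLpPenalty g hp.le hq.le).add hf).exists_forall_le
    (Filter.tendsto_atTop_add_right_of_le _ c (tendsto_groupLpPenalty_cocompact_atTop g hp hq)
      fun x => hc (Set.mem_range_self x))

end GroupPenalty

theorem continuous_sum_abs_mulVec_sub_rpow {ι μ : Type*} [Fintype ι] [Fintype μ] {r : ℝ}
    (hr : 0 ≤ r) (A : Matrix μ ι ℝ) (y : μ → ℝ) :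
    Continuous fun x => ∑ k, |(A.mulVec x - y) k| ^ r := by
  have residual_continuous : Continuous fun x => A.mulVec x - y :=
    (continuous_const.matrix_mulVec continuous_id).sub continuous_const
  exact continuous_finsetSum _ fun k _ =>
    ((continuous_apply k).comp residual_continuous).abs.rpow_const fun _ => .inr hr

theorem stmt_16_general {ι κ μ : Type*} [Fintype ι] [Fintype κ] [DecidableEq κ] [Fintype μ]
    (g : ι → κ) {p q r α : ℝ} (hp : 0 < p) (hq : 0 < q) (hr : 0 < r) (hα : 0 < α)
    (A : Matrix μ ι ℝ) (y : μ → ℝ) :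
    ∃ x₀, ∀ x, groupLpPenalty g p q x₀ + (1 / (r * α)) * ∑ k, |(A.mulVec x₀ - y) k| ^ r
      ≤ groupLpPenalty g p q x + (1 / (r * α)) * ∑ k, |(A.mulVec x - y) k| ^ r := by
  refine exists_forall_groupLpPenalty_add_le g hp hq
    (continuous_const.mul (continuous_sum_abs_mulVec_sub_rpow hr.le A y)) ⟨0, ?_⟩
  rintro _ ⟨x, rfl⟩
  positivity

/-- The group `ℓ_{p,q}`-`ℓ_r` objective (`1 ≤ r < ∞`) attains a global minimum on `ℝ^N`. -/
theorem stmt_16 (N M G : ℕ) (g : Fin N → Fin G) (p q r α : ℝ)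
    (hp : 1 ≤ p) (hq0 : 0 < q) (hq1 : q < 1) (hr : 1 ≤ r) (hα : 0 < α)
    (A : Matrix (Fin M) (Fin N) ℝ) (y : Fin M → ℝ) :
    ∃ xstar : Fin N → ℝ, ∀ x : Fin N → ℝ,
      (∑ i : Fin G, ((∑ j ∈ univ.filter fun j => g j = i, |xstar j| ^ p) ^ (1 / p)) ^ q)
          + (1 / (r * α)) * ∑ k, |(A.mulVec xstar - y) k| ^ r
        ≤ (∑ i : Fin G, ((∑ j ∈ univ.filter fun j => g j = i, |x j| ^ p) ^ (1 / p)) ^ q)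
          + (1 / (r * α)) * ∑ k, |(A.mulVec x - y) k| ^ r :=
  stmt_16_general g (zero_lt_one.trans_le hp) hq0 (zero_lt_one.trans_le hr) hα A y
end

section
/- Let p ≥ 1, 0 < q < 1, α > 0, A ∈ ℝ^{M×N}, and y ∈ ℝ^M. Then the objective function E(x) = ∑_{i=1}^G ‖x_i‖_p^q + (1/α)·max_{k=1,…,M} |(Ax − y)_k| attains a global minimum on ℝ^N: there exists x* ∈ ℝ^N with E(x*) ≤ E(x) for all x ∈ ℝ^N. -/
open Finset

/-!
Every coordinate satisfies `‖x j‖ ≤ ‖x_{g j}‖_p`, so the penalty dominates `‖x‖_∞ ^ q`. It is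
therefore coercive for every `q > 0`, convex or not, and stays so after adding a fidelity term
bounded below; a continuous coercive function on a proper space attains its minimum.
-/

section GroupPenalty

variable {ι κ E : Type*} [Fintype ι] [DecidableEq κ] [SeminormedAddCommGroup E]

/-- The `ℓ_p` norm `‖x_i‖_p` of the restriction of `x` to the group `{j | g j = i}`, for a real
exponent `p > 0` (only a quasi-norm when `p < 1`). -/
noncomputable def groupNorm (g : ι → κ) (p : ℝ) (x : ι → E) (i : κ) : ℝ :=
  (∑ j with g j = i, ‖x j‖ ^ p) ^ (1 / p)

/-- The group sparsity penalty `∑ᵢ ‖x_i‖_p ^ q`, that is, the `q`-th power of the mixed `ℓ_{p,q}`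
(quasi-)norm of `x`. -/
noncomputable def groupPenalty [Fintype κ] (g : ι → κ) (p q : ℝ) (x : ι → E) : ℝ :=
  ∑ i, groupNorm g p x i ^ q

variable (g : ι → κ) {p q : ℝ}

lemma groupNorm_nonneg (p : ℝ) (x : ι → E) (i : κ) : 0 ≤ groupNorm g p x i := by
  unfold groupNorm
  positivity

lemma norm_apply_le_groupNorm (hp : 0 < p) (x : ι → E) (j : ι) :
    ‖x j‖ ≤ groupNorm g p x (g j) := by
  rw [groupNorm, one_div, Real.le_rpow_inv_iff_of_pos (norm_nonneg _) (by positivity) hp]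
  exact single_le_sum (f := fun k => ‖x k‖ ^ p) (fun _ _ => by positivity)
    (mem_filter.2 ⟨mem_univ j, rfl⟩)

lemma continuous_groupNorm (hp : 0 ≤ p) (i : κ) :
    Continuous fun x : ι → E => groupNorm g p x i :=
  (continuous_finsetSum _ fun j _ =>
    (continuous_apply j).norm.rpow_const fun _ => .inr hp).rpow_const
      fun _ => .inr (one_div_nonneg.2 hp)

variable [Fintype κ]

lemma groupPenalty_nonneg (p q : ℝ) (x : ι → E) : 0 ≤ groupPenalty g p q x :=
  sum_nonneg fun i _ => Real.rpow_nonneg (groupNorm_nonneg g p x i) q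

lemma norm_apply_rpow_le_groupPenalty (hp : 0 < p) (hq : 0 ≤ q) (x : ι → E) (j : ι) :
    ‖x j‖ ^ q ≤ groupPenalty g p q x :=
  calc ‖x j‖ ^ q ≤ groupNorm g p x (g j) ^ q :=
        Real.rpow_le_rpow (norm_nonneg _) (norm_apply_le_groupNorm g hp x j) hq
    _ ≤ groupPenalty g p q x :=
        single_le_sum (f := fun i => groupNorm g p x i ^ q)
          (fun i _ => Real.rpow_nonneg (groupNorm_nonneg g p x i) q) (mem_univ (g j))

lemma norm_rpow_le_groupPenalty (hp : 0 < p) (hq : 0 < q) (x : ι → E) :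
    ‖x‖ ^ q ≤ groupPenalty g p q x := by
  have hpen := groupPenalty_nonneg g p q x
  rw [← Real.le_rpow_inv_iff_of_pos (norm_nonneg x) hpen hq,
    pi_norm_le_iff_of_nonneg (Real.rpow_nonneg hpen _)]
  intro j
  rw [Real.le_rpow_inv_iff_of_pos (norm_nonneg _) hpen hq]
  exact norm_apply_rpow_le_groupPenalty g hp hq.le x j

lemma continuous_groupPenalty (hp : 0 ≤ p) (hq : 0 ≤ q) :
    Continuous (groupPenalty g p q : (ι → E) → ℝ) :=
  continuous_finsetSum _ fun i _ => (continuous_groupNorm g hp i).rpow_const fun _ => .inr hq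

lemma tendsto_groupPenalty_cobounded_atTop (hp : 0 < p) (hq : 0 < q) :
    Filter.Tendsto (groupPenalty g p q : (ι → E) → ℝ) (Bornology.cobounded _) Filter.atTop :=
  Filter.tendsto_atTop_mono (norm_rpow_le_groupPenalty g hp hq)
    ((tendsto_rpow_atTop hq).comp tendsto_norm_cobounded_atTop)

theorem stmt_17_general [ProperSpace E] (hp : 0 < p) (hq : 0 < q) {F : (ι → E) → ℝ}
    (hF : Continuous F) (hF_bdd : BddBelow (Set.range F)) :
    ∃ xstar, ∀ x, groupPenalty g p q xstar + F xstar ≤ groupPenalty g p q x + F x := by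
  obtain ⟨c, hc⟩ := hF_bdd
  refine ((continuous_groupPenalty g hp.le hq.le).add hF).exists_forall_le ?_
  rw [← Metric.cobounded_eq_cocompact]
  exact Filter.tendsto_atTop_add_right_of_le _ c (tendsto_groupPenalty_cobounded_atTop g hp hq)
    fun x => hc ⟨x, rfl⟩

end GroupPenalty

/-- The group `ℓ_{p,q}`-`ℓ_∞` objective attains a global minimum on `ℝ^N`.
The fidelity term `max_k |(Ax − y)_k|` is the sup norm `‖A.mulVec x - y‖` on `Fin M → ℝ`. -/
theorem stmt_17 (N M G : ℕ) (g : Fin N → Fin G) (p q α : ℝ)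
    (hp : 1 ≤ p) (hq0 : 0 < q) (hq1 : q < 1) (hα : 0 < α)
    (A : Matrix (Fin M) (Fin N) ℝ) (y : Fin M → ℝ) :
    ∃ xstar : Fin N → ℝ, ∀ x : Fin N → ℝ,
      (∑ i : Fin G, ((∑ j ∈ univ.filter fun j => g j = i, |xstar j| ^ p) ^ (1 / p)) ^ q)
          + (1 / α) * ‖A.mulVec xstar - y‖
        ≤ (∑ i : Fin G, ((∑ j ∈ univ.filter fun j => g j = i, |x j| ^ p) ^ (1 / p)) ^ q)
          + (1 / α) * ‖A.mulVec x - y‖ :=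
  stmt_17_general g (zero_lt_one.trans_le hp) hq0 (F := fun x => 1 / α * ‖A.mulVec x - y‖)
    (by fun_prop) ⟨0, Set.forall_mem_range.2 fun _ => by positivity⟩
end
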